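/- Let n ≥ 1 and let v, w ∈ ℝ^{n+1} with v ≠ 0. Then ι_n(v) = ι_n(w) if and only if w = v or w = −v, where ι_n is the inductively defined map over ℝ described in the context. (Hence ι_n descends to an injection of ℙ^n(ℝ) into the unit sphere.) -/

import Mathlib

/-!
The proof is by induction on `n`. For `n = 1` the map is complex squaring in real coordinates, so
its fibres are the pairs `±v`. For the step, write `v = (v', t)` and `w = (w', s)`.
The induction hypothesis gives `w' = ±v'`. If `v' ≠ 0`, the components `t * v'_i` determine
`s = ±t` with the same sign. If `v' = 0`, then `w' = 0`, and the last component gives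
`t ^ 2 = s ^ 2`.
The coefficients `a_n`, `b_n` only matter through being nonzero.
-/

open scoped BigOperators

noncomputable section

/-- The radii `r_n` with `r_n^4 = ((n+1)/2)^2 (n-1)!`. -/
def rad (n : ℕ) : ℝ := ((((n : ℝ) + 1) / 2) ^ 2 * (Nat.factorial (n - 1) : ℝ)) ^ ((1 : ℝ) / 4)

/-- The number of (field) components of `ι_n`. -/
def numComp : ℕ → ℕ
  | 0 => 2
  | 1 => 2
  | (m + 2) => numComp (m + 1) + (m + 2) + 1

/-- The inductively defined maps `ι_n : 𝕜^{n+1} → 𝕜^{L_n+1}` (over `𝕜 = ℝ`), recorded via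
their components, written as a sequence indexed by `ℕ` that vanishes beyond the
dimension of the codomain.  Real components are embedded into `𝕜` via `algebraMap`. -/
def iota : (n : ℕ) → (Fin (n + 1) → ℝ) → ℕ → ℝ
  | 0, _, _ => 0
  | 1, v, j =>
      if j = 0 then 2 * v 0 * star (v 1)
      else if j = 1 then algebraMap ℝ ℝ (‖v 0‖ ^ 2 - ‖v 1‖ ^ 2)
      else 0
  | (m + 2), v, j =>
      let c : ℝ := ((m : ℝ) + 3) ^ (-(1 : ℝ) / 2)
      let b : ℝ := ((((m : ℝ) + 2) ^ 2 - 1) * (rad (m + 1)) ^ 4) ^ (-(1 : ℝ) / 2)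
      let a : ℝ := (2 * ((m : ℝ) + 2) * ((m : ℝ) + 3)) ^ ((1 : ℝ) / 2) * b
      if h : j < numComp (m + 1) then
        algebraMap ℝ ℝ c * iota (m + 1) (fun i => v i.castSucc) j
      else if h2 : j < numComp (m + 1) + (m + 2) then
        algebraMap ℝ ℝ (c * a) * star (v (Fin.last (m + 2))) *
          v ⟨j - numComp (m + 1), by omega⟩
      else if j = numComp (m + 1) + (m + 2) then
        algebraMap ℝ ℝ (c * b *
          ((∑ i : Fin (m + 2), ‖v i.castSucc‖ ^ 2) - ((m : ℝ) + 2) * ‖v (Fin.last (m + 2))‖ ^ 2))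
      else 0

theorem rad_pos (n : ℕ) : 0 < rad n := by
  unfold rad
  positivity

theorem iota_eq_zero_of_numComp_le (n : ℕ) (v : Fin (n + 1) → ℝ) (j : ℕ)
    (hj : numComp n ≤ j) : iota n v j = 0 := by
  match n, v, hj with
  | 0, _, _ => simp [iota]
  | 1, v, hj =>
    simp only [numComp] at hj
    have h0 : j ≠ 0 := by omega
    have h1 : j ≠ 1 := by omega
    simp [iota, h0, h1]
  | m + 2, v, hj =>
    simp only [numComp] at hj
    have h0 : ¬ j < numComp (m + 1) := by omega
    have h1 : ¬ j < numComp (m + 1) + (m + 2) := by omega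
    have h2 : j ≠ numComp (m + 1) + (m + 2) := by omega
    simp only [iota, h0, h1, h2, dite_false, if_false]

theorem iota_neg (n : ℕ) (v : Fin (n + 1) → ℝ) : iota n (-v) = iota n v := by
  induction n with
  | zero => funext j; simp [iota]
  | succ n ih =>
    match n, v, ih with
    | 0, v, _ => funext j; simp [iota]
    | m + 1, v, ih =>
      funext j
      have h := ih (fun i => v i.castSucc)
      have h' : (fun i : Fin (m + 1 + 1) => (-v) i.castSucc) = -(fun i => v i.castSucc) := rfl
      simp only [iota, h', h]
      simp

/-- The coordinatewise content of an equality `ι_n(v) = ι_n(w)` for `n = m + 2`, with the nonzero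
coefficients cancelled. -/
theorem iota_succ_eq (m : ℕ) (v w : Fin (m + 2 + 1) → ℝ) (h : iota (m + 2) v = iota (m + 2) w) :
    iota (m + 1) (fun i => v i.castSucc) = iota (m + 1) (fun i => w i.castSucc) ∧
    (∀ i : Fin (m + 2), v (Fin.last (m + 2)) * v i.castSucc =
      w (Fin.last (m + 2)) * w i.castSucc) ∧
    (∑ i : Fin (m + 2), v i.castSucc ^ 2) - ((m : ℝ) + 2) * v (Fin.last (m + 2)) ^ 2 =
      (∑ i : Fin (m + 2), w i.castSucc ^ 2) - ((m : ℝ) + 2) * w (Fin.last (m + 2)) ^ 2 := by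
  have hc : ((m : ℝ) + 3) ^ (-(1 : ℝ) / 2) ≠ 0 := by positivity
  have hb : ((((m : ℝ) + 2) ^ 2 - 1) * (rad (m + 1)) ^ 4) ^ (-(1 : ℝ) / 2) ≠ 0 := by
    have h1 : 0 < ((m : ℝ) + 2) ^ 2 - 1 := by
      have : (0 : ℝ) ≤ m := m.cast_nonneg
      nlinarith
    have h2 := rad_pos (m + 1)
    positivity
  have ha : (2 * ((m : ℝ) + 2) * ((m : ℝ) + 3)) ^ ((1 : ℝ) / 2) ≠ 0 := by positivity
  refine ⟨?_, ?_, ?_⟩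
  · funext j
    by_cases hj : j < numComp (m + 1)
    · have := congrFun h j
      simp only [iota, hj, dite_true, Algebra.algebraMap_self, RingHom.id_apply] at this
      exact mul_left_cancel₀ hc this
    · rw [iota_eq_zero_of_numComp_le _ _ _ (not_lt.mp hj),
        iota_eq_zero_of_numComp_le _ _ _ (not_lt.mp hj)]
  · intro i
    have := congrFun h (numComp (m + 1) + i)
    have h0 : ¬ numComp (m + 1) + (i : ℕ) < numComp (m + 1) := by omega
    have h1 : numComp (m + 1) + (i : ℕ) < numComp (m + 1) + (m + 2) := by omega
    have hi : ∀ hlt, (⟨numComp (m + 1) + (i : ℕ) - numComp (m + 1), hlt⟩ : Fin (m + 2 + 1))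
        = i.castSucc := fun _ => Fin.ext (by simp)
    simp only [iota, h0, h1, dite_true, dite_false, hi, Algebra.algebraMap_self,
      RingHom.id_apply, star_trivial] at this
    rw [mul_assoc _ (v _), mul_assoc _ (w _)] at this
    exact mul_left_cancel₀ (mul_ne_zero hc (mul_ne_zero ha hb)) this
  · have := congrFun h (numComp (m + 1) + (m + 2))
    have h0 : ¬ numComp (m + 1) + (m + 2) < numComp (m + 1) := by omega
    simp only [iota, h0, lt_irrefl, dite_false, if_true, Algebra.algebraMap_self,
      RingHom.id_apply, Real.norm_eq_abs, sq_abs] at this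
    exact mul_left_cancel₀ (mul_ne_zero hc hb) this

/-- Real form of the injectivity of complex squaring up to sign. -/
theorem sq_map_eq {a b c d : ℝ} (h0 : a * b = c * d) (h1 : a ^ 2 - b ^ 2 = c ^ 2 - d ^ 2) :
    (c = a ∧ d = b) ∨ (c = -a ∧ d = -b) := by
  have hsum : a ^ 2 + b ^ 2 = c ^ 2 + d ^ 2 := by
    refine (sq_eq_sq₀ (by positivity) (by positivity)).mp ?_
    linear_combination 4 * (a * b + c * d) * h0 + (a ^ 2 - b ^ 2 + c ^ 2 - d ^ 2) * h1
  have ha : c ^ 2 = a ^ 2 := by linarith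
  have hb : d ^ 2 = b ^ 2 := by linarith
  rcases sq_eq_sq_iff_eq_or_eq_neg.mp ha with rfl | rfl
  · rcases eq_or_ne c 0 with rfl | hc
    · simpa using sq_eq_sq_iff_eq_or_eq_neg.mp hb
    · exact Or.inl ⟨rfl, (mul_left_cancel₀ hc h0).symm⟩
  · rcases eq_or_ne a 0 with rfl | hc
    · simpa using sq_eq_sq_iff_eq_or_eq_neg.mp hb
    · refine Or.inr ⟨rfl, mul_left_cancel₀ hc ?_⟩
      linarith

/-- Fibres of `ι_n`, `n = m + 1`, are contained in `{v, -v}`. Including `v = 0` here lets the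
induction hypothesis apply when the truncation of a nonzero vector vanishes. -/
theorem eq_or_eq_neg_of_iota_eq (m : ℕ) (v w : Fin (m + 1 + 1) → ℝ)
    (h : iota (m + 1) v = iota (m + 1) w) : w = v ∨ w = -v := by
  induction m with
  | zero =>
    have h0 := congrFun h 0
    have h1 := congrFun h 1
    simp [iota, mul_assoc] at h0 h1
    rcases sq_map_eq h0 h1 with ⟨e0, e1⟩ | ⟨e0, e1⟩
    · left; funext i; fin_cases i <;> simpa
    · right; funext i; fin_cases i <;> simpa
  | succ m ih =>
    obtain ⟨h1, h2, h3⟩ := iota_succ_eq m v w h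
    have hpm := ih _ _ h1
    by_cases hv' : ∀ i : Fin (m + 2), v i.castSucc = 0
    · have hw' : ∀ i : Fin (m + 2), w i.castSucc = 0 := by
        intro i
        rcases hpm with e | e
        · simpa [hv'] using congrFun e i
        · simpa [hv'] using congrFun e i
      have hlast : w (Fin.last (m + 2)) ^ 2 = v (Fin.last (m + 2)) ^ 2 := by
        have hm : ((m : ℝ) + 2) ≠ 0 := by positivity
        simp only [hv', hw'] at h3
        exact mul_left_cancel₀ hm (by linarith)
      rcases sq_eq_sq_iff_eq_or_eq_neg.mp hlast with e | e
      · left; funext i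
        refine Fin.lastCases e (fun i => ?_) i
        rw [hv', hw']
      · right; funext i
        refine Fin.lastCases e (fun i => ?_) i
        simp [hv', hw']
    · push Not at hv'
      obtain ⟨k, hk⟩ := hv'
      rcases hpm with e | e
      · left; funext i
        refine Fin.lastCases ?_ (fun i => congrFun e i) i
        have ek : w k.castSucc = v k.castSucc := congrFun e k
        have := h2 k
        rw [ek] at this
        exact (mul_right_cancel₀ hk this).symm
      · right; funext i
        refine Fin.lastCases ?_ (fun i => congrFun e i) i
        have ek : w k.castSucc = -v k.castSucc := congrFun e k
        have := h2 k
        rw [ek] at this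
        refine mul_right_cancel₀ hk ?_
        simp only [Pi.neg_apply]
        linarith

/-- For `v ≠ 0`, `ι_n(v) = ι_n(w)` iff `w = v` or `w = -v`;
hence `ι_n` descends to an injection of `ℙ^n(ℝ)` into the unit sphere. -/
theorem iota_eq_iff_pm (n : ℕ) (hn : 1 ≤ n) (v w : Fin (n + 1) → ℝ)
    (hv : v ≠ 0) :
    iota n v = iota n w ↔ w = v ∨ w = -v := by
  constructor
  · obtain ⟨m, rfl⟩ : ∃ m, n = m + 1 := ⟨n - 1, by omega⟩
    exact eq_or_eq_neg_of_iota_eq m v w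
  · rintro (rfl | rfl)
    · rfl
    · exact (iota_neg n v).symm

end
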